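/- (Domination of G₁ by its dissipation rate.) There exists α₀ ∈ (0,1] such that for every α ∈ (0,α₀), all real sequences u, v with ‖u‖₁ < ∞ and ‖v‖₁ < ∞, and every real Q ≥ 0, one has G₁ ≤ ((2+c)/(2κ²)) · L₁, where G₁ := E + (αc/2)(u,v) + (α²c/4)‖u‖₁², L₁ := (1/2)( c‖u‖₁² + 2‖v‖₁² − c‖v‖² + 4cQ ), E := (1/2)(‖u‖₁² + ‖v‖²) + Q, and κ := min(c,1). -/

import Mathlib

open scoped BigOperators

/-!
Put `c = m₀² + λ₀`, so that `c‖·‖² ≤ ‖·‖₁²`. This lower bound gives `c E ≤ L₁` at once. It also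
turns `2√c (u, v) ≤ c‖u‖² + ‖v‖²` into `2√c (u, v) ≤ ‖u‖₁² + ‖v‖² ≤ 2E`, so both correction terms
of `G₁` are bounded by multiples of `E`: with `t = α√c`, `G₁ ≤ (1 + t/2 + t²/2) E`. Once `t ≤ 1/2`
the factor is at most `3/2`, and `3/(2c)` is at most `(2 + c)/(2κ²)`.
-/

section SquareSummable

variable {ι : Type*} {f g : ι → ℝ}

theorem summable_mul_of_summable_sq (hf : Summable fun i => f i ^ 2)
    (hg : Summable fun i => g i ^ 2) : Summable fun i => f i * g i := by
  refine Summable.of_norm_bounded (hf.add hg) fun i => ?_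
  have hyoung : 2 * |f i| * |g i| ≤ f i ^ 2 + g i ^ 2 := by
    simpa only [sq_abs] using two_mul_le_add_sq |f i| |g i|
  rw [Real.norm_eq_abs, abs_mul]
  linarith [mul_nonneg (abs_nonneg (f i)) (abs_nonneg (g i))]

theorem two_mul_tsum_mul_le_add_tsum_sq (hf : Summable fun i => f i ^ 2)
    (hg : Summable fun i => g i ^ 2) :
    2 * ∑' i, f i * g i ≤ (∑' i, f i ^ 2) + ∑' i, g i ^ 2 := by
  rw [← tsum_mul_left, ← hf.tsum_add hg]
  refine ((summable_mul_of_summable_sq hf hg).mul_left 2).tsum_le_tsum (fun i => ?_) (hf.add hg)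
  simpa only [mul_assoc] using two_mul_le_add_sq (f i) (g i)

end SquareSummable

namespace KleinGordon

variable {ι : Type*} {w u v : ι → ℝ} {c α Q : ℝ}

/-- The squared norm `∑ wⱼ uⱼ²` of the weighted space `ℓ²(w)`; for `wⱼ = m₀² + λⱼ` this is `‖u‖₁²`.
It is only meaningful when the series converges, the sum being `0` otherwise. -/
noncomputable def weightedNormSq (w u : ι → ℝ) : ℝ :=
  ∑' j, w j * u j ^ 2

/-- The energy `E` of position `u` and velocity `v`. The quartic part of the Hamiltonian enters
only through its value `Q`. -/
noncomputable def energy (w u v : ι → ℝ) (Q : ℝ) : ℝ :=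
  (1 / 2) * (weightedNormSq w u + ∑' j, v j ^ 2) + Q

/-- The Lyapunov functional `G₁`, which perturbs the energy by multiples of `(u, v)` and `‖u‖₁²`. -/
noncomputable def perturbedEnergy (c α : ℝ) (w u v : ι → ℝ) (Q : ℝ) : ℝ :=
  energy w u v Q + (α * c / 2) * (∑' j, u j * v j) + (α ^ 2 * c / 4) * weightedNormSq w u

/-- The dissipation rate `L₁` of the perturbed energy; since `Q` stands for `‖u‖_{L⁴}⁴ / 4`, the
quartic term `c‖u‖_{L⁴}⁴` is written `4cQ`. -/
noncomputable def dissipationRate (c : ℝ) (w u v : ι → ℝ) (Q : ℝ) : ℝ :=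
  (1 / 2) * (c * weightedNormSq w u + 2 * weightedNormSq w v - c * (∑' j, v j ^ 2) + 4 * c * Q)

theorem summable_sq_of_le_weight (hc : 0 < c) (hcw : ∀ j, c ≤ w j)
    (hu : Summable fun j => w j * u j ^ 2) : Summable fun j => u j ^ 2 :=
  (summable_mul_left_iff hc.ne').1 <| Summable.of_nonneg_of_le
    (fun _ => mul_nonneg hc.le (sq_nonneg _))
    (fun j => mul_le_mul_of_nonneg_right (hcw j) (sq_nonneg _)) hu

theorem mul_tsum_sq_le_weightedNormSq (hc : 0 < c) (hcw : ∀ j, c ≤ w j)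
    (hu : Summable fun j => w j * u j ^ 2) : c * ∑' j, u j ^ 2 ≤ weightedNormSq w u := by
  rw [weightedNormSq, ← tsum_mul_left]
  exact ((summable_sq_of_le_weight hc hcw hu).mul_left c).tsum_le_tsum
    (fun j => mul_le_mul_of_nonneg_right (hcw j) (sq_nonneg _)) hu

theorem weightedNormSq_nonneg (hw : ∀ j, 0 ≤ w j) : 0 ≤ weightedNormSq w u :=
  tsum_nonneg fun j => mul_nonneg (hw j) (sq_nonneg _)

theorem weightedNormSq_le_two_mul_energy (hQ : 0 ≤ Q) :
    weightedNormSq w u ≤ 2 * energy w u v Q := by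
  have hv : 0 ≤ ∑' j, v j ^ 2 := tsum_nonneg fun _ => sq_nonneg _
  rw [energy]
  linarith

theorem energy_nonneg (hw : ∀ j, 0 ≤ w j) (hQ : 0 ≤ Q) : 0 ≤ energy w u v Q := by
  linarith [weightedNormSq_nonneg (u := u) hw,
    weightedNormSq_le_two_mul_energy (w := w) (u := u) (v := v) hQ]

theorem sqrt_mul_tsum_mul_le_energy (hc : 0 < c) (hcw : ∀ j, c ≤ w j)
    (hu : Summable fun j => w j * u j ^ 2) (hv : Summable fun j => v j ^ 2) (hQ : 0 ≤ Q) :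
    √c * ∑' j, u j * v j ≤ energy w u v Q := by
  have hscale (j : ι) : (√c * u j) ^ 2 = c * u j ^ 2 := by rw [mul_pow, Real.sq_sqrt hc.le]
  have hyoung : 2 * ∑' j, √c * u j * v j ≤ (∑' j, (√c * u j) ^ 2) + ∑' j, v j ^ 2 := by
    refine two_mul_tsum_mul_le_add_tsum_sq ?_ hv
    simpa only [hscale] using (summable_sq_of_le_weight hc hcw hu).mul_left c
  simp only [hscale, mul_assoc, tsum_mul_left] at hyoung
  rw [energy]
  linarith [mul_tsum_sq_le_weightedNormSq hc hcw hu]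

theorem perturbedEnergy_le_mul_energy (hc : 0 < c) (hcw : ∀ j, c ≤ w j) (hα : 0 ≤ α)
    (hu : Summable fun j => w j * u j ^ 2) (hv : Summable fun j => v j ^ 2) (hQ : 0 ≤ Q) :
    perturbedEnergy c α w u v Q ≤
      (1 + α * √c / 2 + (α * √c) ^ 2 / 2) * energy w u v Q := by
  have hsq : √c * √c = c := Real.mul_self_sqrt hc.le
  have hcross : α * c / 2 * (∑' j, u j * v j) ≤ α * √c / 2 * energy w u v Q := by
    calc α * c / 2 * (∑' j, u j * v j)
        = α * √c / 2 * (√c * ∑' j, u j * v j) := by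
          linear_combination -(α / 2 * ∑' j, u j * v j) * hsq
      _ ≤ α * √c / 2 * energy w u v Q :=
        mul_le_mul_of_nonneg_left (sqrt_mul_tsum_mul_le_energy hc hcw hu hv hQ) (by positivity)
  have hquad : α ^ 2 * c / 4 * weightedNormSq w u ≤ (α * √c) ^ 2 / 2 * energy w u v Q := by
    calc α ^ 2 * c / 4 * weightedNormSq w u
        ≤ α ^ 2 * c / 4 * (2 * energy w u v Q) :=
        mul_le_mul_of_nonneg_left (weightedNormSq_le_two_mul_energy hQ) (by positivity)
      _ = (α * √c) ^ 2 / 2 * energy w u v Q := by rw [mul_pow, Real.sq_sqrt hc.le]; ring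
  rw [perturbedEnergy]
  linarith

theorem mul_energy_le_dissipationRate (hc : 0 < c) (hcw : ∀ j, c ≤ w j)
    (hv : Summable fun j => w j * v j ^ 2) (hQ : 0 ≤ Q) :
    c * energy w u v Q ≤ dissipationRate c w u v Q := by
  rw [energy, dissipationRate]
  linarith [mul_tsum_sq_le_weightedNormSq hc hcw hv, mul_nonneg hc.le hQ]

theorem dissipationRate_nonneg (hc : 0 < c) (hcw : ∀ j, c ≤ w j)
    (hv : Summable fun j => w j * v j ^ 2) (hQ : 0 ≤ Q) : 0 ≤ dissipationRate c w u v Q :=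
  (mul_nonneg hc.le (energy_nonneg (fun j => hc.le.trans (hcw j)) hQ)).trans
    (mul_energy_le_dissipationRate hc hcw hv hQ)

theorem mul_sqrt_le_half_of_le (hc : 0 ≤ c) (hα : α ≤ 1 / (1 + c)) : α * √c ≤ 1 / 2 := by
  have hsqrt : √c ≤ (1 + c) / 2 := by
    linarith [two_mul_le_add_sq 1 √c, Real.sq_sqrt hc]
  calc α * √c ≤ 1 / (1 + c) * ((1 + c) / 2) := by gcongr
    _ = 1 / 2 := by field_simp

theorem three_div_two_mul_le_div_min_sq (hc : 0 < c) :
    3 / (2 * c) ≤ (2 + c) / (2 * min c 1 ^ 2) := by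
  have hκ : 0 < min c 1 := lt_min hc one_pos
  have hκ_sq_le : min c 1 ^ 2 ≤ c := by
    calc min c 1 ^ 2 = min c 1 * min c 1 := sq _
      _ ≤ c * 1 := mul_le_mul (min_le_left _ _) (min_le_right _ _) hκ.le hc.le
      _ = c := mul_one c
  have hκ_sq_le_sq : min c 1 ^ 2 ≤ c ^ 2 := pow_le_pow_left₀ hκ.le (min_le_left _ _) 2
  rw [div_le_div_iff₀ (by positivity) (by positivity)]
  linarith

theorem energy_factor_div_le (hc : 0 < c) (hα : 0 ≤ α) (hα' : α ≤ 1 / (1 + c)) :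
    (1 + α * √c / 2 + (α * √c) ^ 2 / 2) / c ≤ (2 + c) / (2 * min c 1 ^ 2) := by
  have ht : α * √c ≤ 1 / 2 := mul_sqrt_le_half_of_le hc.le hα'
  have ht_sq : (α * √c) ^ 2 ≤ (1 / 2) ^ 2 := pow_le_pow_left₀ (by positivity) ht 2
  calc (1 + α * √c / 2 + (α * √c) ^ 2 / 2) / c
      ≤ (3 / 2) / c := div_le_div_of_nonneg_right (by linarith) hc.le
    _ = 3 / (2 * c) := div_div _ _ _
    _ ≤ (2 + c) / (2 * min c 1 ^ 2) := three_div_two_mul_le_div_min_sq hc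

end KleinGordon

open KleinGordon in
theorem G1_dominated_by_L1_general {ι : Type*} {w u v : ι → ℝ} {c α Q : ℝ} (hc : 0 < c)
    (hcw : ∀ j, c ≤ w j) (hα : 0 ≤ α) (hu : Summable fun j => w j * u j ^ 2)
    (hv : Summable fun j => w j * v j ^ 2) (hQ : 0 ≤ Q) :
    perturbedEnergy c α w u v Q ≤
      (1 + α * √c / 2 + (α * √c) ^ 2 / 2) / c * dissipationRate c w u v Q := by
  calc perturbedEnergy c α w u v Q
      ≤ (1 + α * √c / 2 + (α * √c) ^ 2 / 2) * energy w u v Q :=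
      perturbedEnergy_le_mul_energy hc hcw hα hu (summable_sq_of_le_weight hc hcw hv) hQ
    _ = (1 + α * √c / 2 + (α * √c) ^ 2 / 2) / c * (c * energy w u v Q) := by field_simp
    _ ≤ (1 + α * √c / 2 + (α * √c) ^ 2 / 2) / c * dissipationRate c w u v Q :=
      mul_le_mul_of_nonneg_left (mul_energy_le_dissipationRate hc hcw hv hQ) (by positivity)

/-- **Domination of `G₁` by its dissipation rate.** There is `α₀ ∈ (0,1]` such that
for all `α ∈ (0,α₀)`, sequences `u, v` with `‖u‖₁ < ∞`, `‖v‖₁ < ∞` and `Q ≥ 0`,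
one has `G₁ ≤ ((2+c)/(2κ²)) L₁`, where
`G₁ = E + (αc/2)(u,v) + (α²c/4)‖u‖₁²`,
`L₁ = (1/2)(c‖u‖₁² + 2‖v‖₁² − c‖v‖² + 4cQ)`,
`E = (1/2)(‖u‖₁² + ‖v‖²) + Q`, `c = m₀² + λ₀` and `κ = min(c,1)`. -/
theorem G1_dominated_by_L1
    (lam : ℕ → ℝ) (hmono : Monotone lam) (hlam : ∀ j, 0 ≤ lam j)
    (m0sq : ℝ) (hc : 0 < m0sq + lam 0) :
    ∃ α₀ : ℝ, 0 < α₀ ∧ α₀ ≤ 1 ∧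
      ∀ α : ℝ, 0 < α → α < α₀ →
      ∀ u v : ℕ → ℝ,
        (Summable fun j => (m0sq + lam j) * u j ^ 2) →
        (Summable fun j => (m0sq + lam j) * v j ^ 2) →
      ∀ Q : ℝ, 0 ≤ Q →
      ∀ E G₁ L₁ : ℝ,
        E = (1 / 2) * ((∑' j, (m0sq + lam j) * u j ^ 2) + ∑' j, v j ^ 2) + Q →
        G₁ = E + (α * (m0sq + lam 0) / 2) * (∑' j, u j * v j) +
          (α ^ 2 * (m0sq + lam 0) / 4) * ∑' j, (m0sq + lam j) * u j ^ 2 →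
        L₁ = (1 / 2) * ((m0sq + lam 0) * (∑' j, (m0sq + lam j) * u j ^ 2) +
          2 * (∑' j, (m0sq + lam j) * v j ^ 2) -
          (m0sq + lam 0) * (∑' j, v j ^ 2) + 4 * (m0sq + lam 0) * Q) →
        G₁ ≤ ((2 + (m0sq + lam 0)) / (2 * min (m0sq + lam 0) 1 ^ 2)) * L₁ := by
  have hcw (j : ℕ) : m0sq + lam 0 ≤ m0sq + lam j := by gcongr; exact hmono j.zero_le
  refine ⟨1 / (1 + (m0sq + lam 0)), by positivity,
    div_le_one_of_le₀ (by linarith) (by positivity), ?_⟩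
  rintro α hα hα' u v hu hv Q hQ _ _ _ rfl rfl rfl
  exact (G1_dominated_by_L1_general hc hcw hα.le hu hv hQ).trans <|
    mul_le_mul_of_nonneg_right (KleinGordon.energy_factor_div_le hc hα.le hα'.le)
      (KleinGordon.dissipationRate_nonneg hc hcw hv hQ)
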